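/- arXiv:1307.4837 — 7 statements merged into one kernel-verified Lean document; each statement's English description precedes it below -/
import Mathlib

section
/- For all positive integers p and q, the groups G(p;q) and G(q;p) are isomorphic. -/
/-- The word `a_{p-1} a_{p-2} ⋯ a_0` in the free group on `Option ℤ`,
where `some k` stands for the generator `a k` and `none` stands for `ω`. -/
def omegaWord (p : ℕ) : FreeGroup (Option ℤ) :=
  ((List.range p).reverse.map (fun i => FreeGroup.of (some (i : ℤ)))).prod

/-- The relators of the group `G(p;q)`:
`ω = a_{p-1}⋯a_0`, `a_{k+q} = a_k` and `a_{k+p} = ω a_k ω⁻¹` for all `k ∈ ℤ`. -/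
def gRels (p q : ℕ) : Set (FreeGroup (Option ℤ)) :=
  {FreeGroup.of none * (omegaWord p)⁻¹} ∪
    (⋃ k : ℤ, {FreeGroup.of (some (k + (q : ℤ))) * (FreeGroup.of (some k))⁻¹}) ∪
    (⋃ k : ℤ, {FreeGroup.of (some (k + (p : ℤ))) *
      (FreeGroup.of none * FreeGroup.of (some k) * (FreeGroup.of none)⁻¹)⁻¹})

/-- The group `G(p;q)`. -/
abbrev Gpq (p q : ℕ) : Type := PresentedGroup (gRels p q)

/-- Partial products `s_k` of a bi-infinite sequence: `s_0 = 1`, `s_{k+1} = a_k s_k`. -/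
def partProd {G : Type*} [Group G] (a : ℤ → G) : ℤ → G
  | Int.ofNat n => Nat.rec 1 (fun n x => a n * x) n
  | Int.negSucc n =>
      Nat.rec ((a (-1))⁻¹ * 1) (fun n x => (a (Int.negSucc (n + 1)))⁻¹ * x) n

theorem partProd_zero {G : Type*} [Group G] (a : ℤ → G) : partProd a 0 = 1 := rfl

theorem partProd_succ {G : Type*} [Group G] (a : ℤ → G) (k : ℤ) :
    partProd a (k + 1) = a k * partProd a k := by
  rcases k with n | n
  · rfl
  · rcases n with _ | n
    · change (1 : G) = a (-1) * ((a (-1))⁻¹ * 1)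
      simp
    · have h : Int.negSucc (n + 1) + 1 = Int.negSucc n := by omega
      rw [h]
      change _ = a (Int.negSucc (n + 1)) * ((a (Int.negSucc (n + 1)))⁻¹ * partProd a (Int.negSucc n))
      simp

theorem seq_unique {G : Type*} [Group G] (a s t : ℤ → G) (h0 : s 0 = t 0)
    (hs : ∀ k, s (k + 1) = a k * s k) (ht : ∀ k, t (k + 1) = a k * t k) (k : ℤ) :
    s k = t k := by
  induction k using Int.induction_on with
  | zero => exact h0
  | succ n ih => rw [hs, ht, ih]
  | pred n ih =>
    have h1 := hs (-(n : ℤ) - 1)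
    have h2 := ht (-(n : ℤ) - 1)
    rw [sub_add_cancel] at h1 h2
    rw [h1, h2] at ih
    exact mul_left_cancel ih

theorem omegaWord_succ (n : ℕ) :
    omegaWord (n + 1) = FreeGroup.of (some (n : ℤ)) * omegaWord n := by
  simp [omegaWord, List.range_succ]

theorem map_omegaWord {H : Type*} [Group H] (f : FreeGroup (Option ℤ) →* H) (t : ℤ → H)
    (h0 : t 0 = 1) (ht : ∀ k, t (k + 1) = f (FreeGroup.of (some k)) * t k) (n : ℕ) :
    f (omegaWord n) = t n := by
  induction n with
  | zero => simp [omegaWord, h0]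
  | succ n ih => rw [omegaWord_succ, map_mul, ih]; push_cast; rw [ht]

/-- The generators `a_k` in `G(p;q)`. -/
def gA (p q : ℕ) (k : ℤ) : Gpq p q := PresentedGroup.of (some k)

/-- The generator `ω` in `G(p;q)`. -/
def gW (p q : ℕ) : Gpq p q := PresentedGroup.of none

/-- The partial products in `G(p;q)`. -/
def gS (p q : ℕ) : ℤ → Gpq p q := partProd (gA p q)

theorem gS_zero (p q : ℕ) : gS p q 0 = 1 := rfl

theorem gS_succ (p q : ℕ) (k : ℤ) : gS p q (k + 1) = gA p q k * gS p q k :=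
  partProd_succ _ _

theorem gA_add_q (p q : ℕ) (k : ℤ) : gA p q (k + q) = gA p q k := by
  have h : PresentedGroup.mk (gRels p q)
      (FreeGroup.of (some (k + (q : ℤ))) * (FreeGroup.of (some k))⁻¹) = 1 :=
    PresentedGroup.one_of_mem (Or.inl (Or.inr (Set.mem_iUnion.2 ⟨k, rfl⟩)))
  rw [map_mul, map_inv] at h
  exact mul_inv_eq_one.1 h

theorem gA_add_p (p q : ℕ) (k : ℤ) :
    gA p q (k + p) = gW p q * gA p q k * (gW p q)⁻¹ := by
  have h : PresentedGroup.mk (gRels p q) (FreeGroup.of (some (k + (p : ℤ))) *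
      (FreeGroup.of none * FreeGroup.of (some k) * (FreeGroup.of none)⁻¹)⁻¹) = 1 :=
    PresentedGroup.one_of_mem (Or.inr (Set.mem_iUnion.2 ⟨k, rfl⟩))
  rw [map_mul, map_inv, map_mul, map_mul, map_inv] at h
  exact mul_inv_eq_one.1 h

theorem gW_eq (p q : ℕ) : gW p q = gS p q p := by
  have h : PresentedGroup.mk (gRels p q) (FreeGroup.of none * (omegaWord p)⁻¹) = 1 :=
    PresentedGroup.one_of_mem (Or.inl (Or.inl rfl))
  rw [map_mul, map_inv, map_omegaWord _ (gS p q) (gS_zero p q) (gS_succ p q)] at h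
  exact mul_inv_eq_one.1 h

theorem gS_add_p (p q : ℕ) (k : ℤ) : gS p q (k + p) = gS p q p * gS p q k := by
  have h := seq_unique (gA p q) (fun k => (gS p q p)⁻¹ * gS p q (k + p)) (gS p q)
    (by simp [gS_zero])
    (fun k => by
      have e : k + 1 + (p : ℤ) = k + p + 1 := by ring
      simp only [e, gS_succ, gA_add_p, gW_eq]
      group) (gS_succ p q) k
  rw [← h]; simp

theorem gS_add_q (p q : ℕ) (k : ℤ) : gS p q (k + q) = gS p q k * gS p q q := by
  have h := seq_unique (gA p q) (fun k => gS p q (k + q) * (gS p q q)⁻¹) (gS p q)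
    (by simp [gS_zero])
    (fun k => by
      have e : k + 1 + (q : ℤ) = k + q + 1 := by ring
      simp only [e, gS_succ, gA_add_q]
      group) (gS_succ p q) k
  rw [← h]; simp

theorem exists_lift (p q : ℕ) {H : Type*} [Group H] (t : ℤ → H) (h0 : t 0 = 1)
    (hp : ∀ k, t (k + p) = t p * t k) (hq : ∀ k, t (k + q) = t k * t q) :
    ∃ f : Gpq p q →* H, ∀ k, f (gS p q k) = t k := by
  let g : Option ℤ → H := fun o => o.elim (t p) (fun k => t (k + 1) * (t k)⁻¹)
  have hr : ∀ r ∈ gRels p q, FreeGroup.lift g r = 1 := by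
    rintro r ((h | h) | h)
    · rw [Set.mem_singleton_iff.1 h, map_mul, map_inv,
        map_omegaWord _ t h0 (fun k => by simp [g])]
      simp [g]
    · obtain ⟨k, h⟩ := Set.mem_iUnion.1 h
      rw [Set.mem_singleton_iff.1 h]
      have e : k + (q : ℤ) + 1 = k + 1 + q := by ring
      simp only [map_mul, map_inv, FreeGroup.lift_apply_of, g, Option.elim, e, hq]
      group
    · obtain ⟨k, h⟩ := Set.mem_iUnion.1 h
      rw [Set.mem_singleton_iff.1 h]
      have e : k + (p : ℤ) + 1 = k + 1 + p := by ring
      simp only [map_mul, map_inv, FreeGroup.lift_apply_of, g, Option.elim, e, hp]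
      group
  refine ⟨PresentedGroup.toGroup hr, ?_⟩
  have ha : ∀ k, PresentedGroup.toGroup hr (gA p q k) = t (k + 1) * (t k)⁻¹ := fun k =>
    PresentedGroup.toGroup.of hr
  refine seq_unique (fun k => t (k + 1) * (t k)⁻¹) _ _ ?_ ?_ ?_
  · simp [gS_zero, h0]
  · intro k; rw [gS_succ, map_mul, ha]
  · intro k; simp

theorem hom_ext_gS (p q : ℕ) {H : Type*} [Group H] (f g : Gpq p q →* H)
    (h : ∀ k, f (gS p q k) = g (gS p q k)) : f = g := by
  apply PresentedGroup.ext
  rintro (_ | k)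
  · change f (gW p q) = g (gW p q)
    rw [gW_eq, h]
  · change f (gA p q k) = g (gA p q k)
    rw [eq_mul_inv_of_mul_eq (gS_succ p q k).symm, map_mul, map_mul, map_inv, map_inv, h, h]

theorem exists_gpq_swap (p q : ℕ) :
    ∃ f : Gpq p q →* Gpq q p, ∀ k, f (gS p q k) = (gS q p k)⁻¹ :=
  exists_lift p q (fun k => (gS q p k)⁻¹) (by simp [gS_zero])
    (fun k => by simp [gS_add_q q p]) (fun k => by simp [gS_add_p q p])

/-- For all positive integers `p` and `q`, the groups `G(p;q)` and `G(q;p)` are isomorphic. -/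
theorem stmt_4 (p q : ℕ) (hp : 0 < p) (hq : 0 < q) :
    Nonempty (Gpq p q ≃* Gpq q p) := by
  obtain ⟨f, hf⟩ := exists_gpq_swap p q
  obtain ⟨g, hg⟩ := exists_gpq_swap q p
  exact ⟨MonoidHom.toMulEquiv f g
    (hom_ext_gS p q _ _ fun k => by simp [hf, hg])
    (hom_ext_gS q p _ _ fun k => by simp [hf, hg])⟩
end

section
/- For positive integers p and q, if q = 1 or p = 1 then the group G(p;q) is isomorphic to the infinite cyclic group ℤ. -/
theorem Gpq_some_eq (p q : ℕ) (h : q = 1 ∨ p = 1) (k : ℤ) :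
    (PresentedGroup.of (some k) : Gpq p q) = PresentedGroup.of (some 0) := by
  have step : ∀ k : ℤ, (PresentedGroup.of (some (k + 1)) : Gpq p q) =
      PresentedGroup.of (some k) := by
    rcases h with rfl | rfl
    · intro k
      have h1 := PresentedGroup.one_of_mem (rels := gRels p 1)
        (x := FreeGroup.of (some (k + ((1 : ℕ) : ℤ))) * (FreeGroup.of (some k))⁻¹)
        (Or.inl (Or.inr (Set.mem_iUnion.2 ⟨k, rfl⟩)))
      rw [map_mul, map_inv, mul_inv_eq_one] at h1
      exact h1
    · have h0 := PresentedGroup.one_of_mem (rels := gRels 1 q)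
        (x := FreeGroup.of none * (omegaWord 1)⁻¹) (Or.inl (Or.inl rfl))
      have hw : omegaWord 1 = FreeGroup.of (some 0) := by
        simp [omegaWord]
      rw [hw, map_mul, map_inv, mul_inv_eq_one] at h0
      have h1 : ∀ k : ℤ, (PresentedGroup.of (some (k + 1)) : Gpq 1 q) =
          PresentedGroup.of (some 0) * PresentedGroup.of (some k) *
            (PresentedGroup.of (some 0))⁻¹ := by
        intro k
        have h2 := PresentedGroup.one_of_mem (rels := gRels 1 q)
          (x := FreeGroup.of (some (k + ((1 : ℕ) : ℤ))) *
            (FreeGroup.of none * FreeGroup.of (some k) * (FreeGroup.of none)⁻¹)⁻¹)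
          (Or.inr (Set.mem_iUnion.2 ⟨k, rfl⟩))
        rw [map_mul, map_inv, mul_inv_eq_one, map_mul, map_mul, map_inv, h0] at h2
        exact h2
      have h3 : ∀ k : ℤ, (PresentedGroup.of (some k) : Gpq 1 q) =
          PresentedGroup.of (some 0) := by
        intro k
        induction k using Int.induction_on with
        | zero => rfl
        | succ i ih => rw [h1, ih]; group
        | pred i ih =>
          have h4 := h1 (-(i : ℤ) - 1)
          rw [sub_add_cancel, ih, eq_mul_inv_iff_mul_eq, mul_right_inj] at h4
          exact h4.symm
      intro k
      rw [h3, h3 k]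
  induction k using Int.induction_on with
  | zero => rfl
  | succ i ih => rw [step, ih]
  | pred i ih =>
    have h4 := step (-(i : ℤ) - 1)
    rw [sub_add_cancel, ih] at h4
    exact h4.symm

theorem Gpq_none_eq (p q : ℕ) (h : q = 1 ∨ p = 1) :
    (PresentedGroup.of none : Gpq p q) = PresentedGroup.of (some 0) ^ p := by
  have h0 := PresentedGroup.one_of_mem (rels := gRels p q)
    (x := FreeGroup.of none * (omegaWord p)⁻¹) (Or.inl (Or.inl rfl))
  rw [map_mul, map_inv, mul_inv_eq_one] at h0
  refine h0.trans ?_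
  rw [omegaWord, map_list_prod, List.map_map]
  rw [List.prod_eq_pow_card _ (PresentedGroup.of (some 0) : Gpq p q)]
  · simp
  · intro x hx
    obtain ⟨i, -, rfl⟩ := List.mem_map.1 hx
    exact Gpq_some_eq p q h i

/-- Images of the generators in `ℤ`. -/
def genImage (p : ℕ) : Option ℤ → Multiplicative ℤ
  | none => Multiplicative.ofAdd 1 ^ p
  | some _ => Multiplicative.ofAdd 1

theorem genImage_rels (p q : ℕ) :
    ∀ r ∈ gRels p q, FreeGroup.lift (genImage p) r = 1 := by
  rintro r ((hr | hr) | hr)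
  · obtain rfl : r = _ := hr
    rw [map_mul, map_inv, mul_inv_eq_one, omegaWord, map_list_prod, List.map_map,
      List.prod_eq_pow_card _ (Multiplicative.ofAdd (1 : ℤ))]
    · simp [genImage]
    · intro x hx
      obtain ⟨i, -, rfl⟩ := List.mem_map.1 hx
      simp [genImage]
  · obtain ⟨k, hk⟩ := Set.mem_iUnion.1 hr
    obtain rfl : r = _ := hk
    simp [genImage]
  · obtain ⟨k, hk⟩ := Set.mem_iUnion.1 hr
    obtain rfl : r = _ := hk
    simp [genImage]

/-- If `q = 1` or `p = 1`, then `G(p;q)` is isomorphic to the infinite cyclic group `ℤ`. -/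
theorem stmt_8 (p q : ℕ) (hp : 0 < p) (hq : 0 < q) (h : q = 1 ∨ p = 1) :
    Nonempty (Gpq p q ≃* Multiplicative ℤ) := by
  refine ⟨MonoidHom.toMulEquiv (PresentedGroup.toGroup (genImage_rels p q))
    (zpowersHom (Gpq p q) (PresentedGroup.of (some 0))) ?_ ?_⟩
  · apply PresentedGroup.ext
    rintro (_ | k)
    · simp [genImage, Gpq_none_eq p q h]
    · simp [genImage, Gpq_some_eq p q h k]
  · apply MonoidHom.ext_mint
    simp [genImage]
end

section
/- The group G(2;2) is isomorphic to ℤ × ℤ. -/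
/-- The image of a generator of `G(2;2)` in `ℤ × ℤ`. -/
def genImg : Option ℤ → Multiplicative (ℤ × ℤ)
  | none => Multiplicative.ofAdd (1, 1)
  | some k => if k % 2 = 0 then Multiplicative.ofAdd (1, 0) else Multiplicative.ofAdd (0, 1)

theorem genImg_rels : ∀ r ∈ gRels 2 2, FreeGroup.lift genImg r = 1 := by
  intro r hr
  simp only [gRels, Set.mem_union, Set.mem_iUnion, Set.mem_singleton_iff] at hr
  rcases hr with (rfl | ⟨k, rfl⟩) | ⟨k, rfl⟩
  · simp only [omegaWord, List.range_succ, List.range_zero]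
    simp [genImg]
    decide
  · simp [genImg]
  · simp [genImg]

theorem G_rel_omega : (PresentedGroup.of none : Gpq 2 2)
    = PresentedGroup.of (some 1) * PresentedGroup.of (some 0) := by
  have h := PresentedGroup.one_of_mem (rels := gRels 2 2)
    (x := FreeGroup.of none * (omegaWord 2)⁻¹) (by simp [gRels])
  rw [map_mul, map_inv, mul_inv_eq_one] at h
  simpa [omegaWord, List.range_succ, PresentedGroup.of] using h

theorem G_rel_per (k : ℤ) : (PresentedGroup.of (some (k + 2)) : Gpq 2 2)
    = PresentedGroup.of (some k) := by
  have h := PresentedGroup.one_of_mem (rels := gRels 2 2)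
    (x := FreeGroup.of (some (k + ((2 : ℕ) : ℤ))) * (FreeGroup.of (some k))⁻¹)
    (Or.inl (Or.inr (Set.mem_iUnion.2 ⟨k, rfl⟩)))
  rw [map_mul, map_inv, mul_inv_eq_one] at h
  exact h

theorem G_rel_conj (k : ℤ) : (PresentedGroup.of (some (k + 2)) : Gpq 2 2)
    = PresentedGroup.of none * PresentedGroup.of (some k) * (PresentedGroup.of none)⁻¹ := by
  have h := PresentedGroup.one_of_mem (rels := gRels 2 2)
    (x := FreeGroup.of (some (k + ((2 : ℕ) : ℤ))) *
      (FreeGroup.of none * FreeGroup.of (some k) * (FreeGroup.of none)⁻¹)⁻¹)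
    (Or.inr (Set.mem_iUnion.2 ⟨k, rfl⟩))
  rw [map_mul, map_inv, mul_inv_eq_one] at h
  exact h

theorem G_comm : Commute (PresentedGroup.of (some 0) : Gpq 2 2) (PresentedGroup.of (some 1)) := by
  have h := G_rel_conj 0
  rw [G_rel_per, eq_mul_inv_iff_mul_eq, G_rel_omega, ← mul_assoc] at h
  exact mul_right_cancel h

theorem G_even (m : ℤ) (r : ℤ) : (PresentedGroup.of (some (r + 2 * m)) : Gpq 2 2)
    = PresentedGroup.of (some r) := by
  induction m using Int.induction_on with
  | zero => simp
  | succ i ih => rw [← ih, ← G_rel_per (r + 2 * (i : ℤ))]; congr 2; ring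
  | pred i ih => rw [← ih, ← G_rel_per]; congr 2; ring

/-- The inverse homomorphism. -/
def invHom : Multiplicative (ℤ × ℤ) →* Gpq 2 2 where
  toFun x := PresentedGroup.of (some 0) ^ x.toAdd.1 * PresentedGroup.of (some 1) ^ x.toAdd.2
  map_one' := by simp
  map_mul' x y := by
    simp only [toAdd_mul, Prod.fst_add, Prod.snd_add, zpow_add]
    have h := (G_comm.zpow_zpow y.toAdd.1 x.toAdd.2).eq
    simp only [mul_assoc]
    congr 1
    rw [← mul_assoc, h, mul_assoc]

/-- The group `G(2;2)` is isomorphic to `ℤ × ℤ`. -/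
theorem stmt_9 : Nonempty (Gpq 2 2 ≃* Multiplicative (ℤ × ℤ)) := by
  refine ⟨MonoidHom.toMulEquiv (PresentedGroup.toGroup genImg_rels) invHom ?_ ?_⟩
  · ext x
    simp only [MonoidHom.comp_apply, PresentedGroup.toGroup.of, MonoidHom.id_apply]
    rcases x with _ | k
    · simp only [invHom, genImg, MonoidHom.coe_mk, OneHom.coe_mk, toAdd_ofAdd, zpow_one]
      rw [G_rel_omega, G_comm.eq]
    · by_cases hk : k % 2 = 0
      · have h := G_even (k / 2) 0
        rw [show 0 + 2 * (k / 2) = k by omega] at h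
        simp [invHom, genImg, hk, h]
      · have h := G_even (k / 2) 1
        rw [show 1 + 2 * (k / 2) = k by omega] at h
        simp [invHom, genImg, hk, h]
  · apply MonoidHom.ext
    intro x
    simp only [invHom, MonoidHom.comp_apply, MonoidHom.coe_mk, OneHom.coe_mk, map_mul, map_zpow,
      PresentedGroup.toGroup.of, MonoidHom.id_apply, genImg]
    apply Multiplicative.toAdd.injective
    ext <;> simp
end

section
/- Let p and q be positive integers with gcd(p,q) = 1. Then the group G(p;q;q) is isomorphic to the free product ℤ/pℤ * ℤ/qℤ. -/
/-- The relators of the group `G(p;q;r)`: those of `G(p;q)` together with `ω^r = e`. -/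
def gRelsProj (p q r : ℕ) : Set (FreeGroup (Option ℤ)) :=
  gRels p q ∪ {(FreeGroup.of none) ^ r}

/-- The group `G(p;q;r)`, the quotient of `G(p;q)` by the relation `ω^r = e`. -/
abbrev Gpqr (p q r : ℕ) : Type := PresentedGroup (gRelsProj p q r)

section Helpers

theorem omegaWord_eq (p : ℕ) : omegaWord p =
    ((List.range p).reverse.map (fun i : ℕ => FreeGroup.of (some (i : ℤ)))).prod := by
  unfold omegaWord
  congr 1
  simp only [List.bind_eq_flatMap, List.pure_def, List.map_flatMap, List.map_cons, List.map_nil]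
  exact List.flatMap_pure_eq_map _ _

/-- A homomorphism out of a finite cyclic group. -/
theorem exists_hom_zmod {H : Type*} [Group H] (n : ℕ) (h : H) (hn : h ^ n = 1) :
    ∃ f : Multiplicative (ZMod n) →* H, f (Multiplicative.ofAdd 1) = h := by
  refine ⟨AddMonoidHom.toMultiplicativeLeft (ZMod.lift n ⟨zmultiplesHom (Additive H) (Additive.ofMul h), ?_⟩), ?_⟩
  · simp only [zmultiplesHom_apply, natCast_zsmul]
    rw [← ofMul_pow, hn]; rfl
  · have := ZMod.lift_coe n (⟨zmultiplesHom (Additive H) (Additive.ofMul h), by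
      simp only [zmultiplesHom_apply, natCast_zsmul]
      rw [← ofMul_pow, hn]; rfl⟩ : {f : ℤ →+ Additive H // f n = 0}) 1
    simp only [Int.cast_one] at this
    simp [this]

theorem mzmod_eq (n : ℕ) (x : Multiplicative (ZMod n)) :
    ∃ k : ℤ, x = (Multiplicative.ofAdd (1 : ZMod n)) ^ k := by
  obtain ⟨k, hk⟩ := ZMod.intCast_surjective (Multiplicative.toAdd x)
  refine ⟨k, ?_⟩
  rw [← ofAdd_zsmul, zsmul_one, hk]; rfl

theorem hom_mzmod_ext {H : Type*} [Group H] (n : ℕ) (f g : Multiplicative (ZMod n) →* H)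
    (h : f (Multiplicative.ofAdd 1) = g (Multiplicative.ofAdd 1)) : f = g := by
  refine MonoidHom.ext fun x => ?_
  obtain ⟨k, rfl⟩ := mzmod_eq n x
  rw [map_zpow, map_zpow, h]

theorem mzmod_pow (n : ℕ) : (Multiplicative.ofAdd (1 : ZMod n)) ^ n = 1 := by
  rw [← ofAdd_nsmul]; simp

theorem zpow_congr_of {H : Type*} [Group H] (w : H) (q : ℕ) (hw : w ^ q = 1) (i j v : ℤ)
    (h : i = j + q * v) : w ^ i = w ^ j := by
  rw [h, zpow_add, zpow_mul, zpow_natCast, hw, one_zpow, mul_one]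

theorem conj_formula {H : Type*} [Group H] (p q : ℕ) (w : H) (a : ℤ → H)
    (h1 : ∀ k, a (k + q) = a k) (h2 : ∀ k, a (k + p) = w * a k * w⁻¹)
    (u v : ℤ) (huv : p * u + q * v = 1) (k : ℤ) :
    a k = w ^ (u * k) * a 0 * (w ^ (u * k))⁻¹ := by
  have e1 : ∀ m k : ℤ, a (k + q * m) = a k := by
    intro m
    induction m using Int.induction_on with
    | zero => simp
    | succ i ih => intro k; rw [← ih k, ← h1 (k + q * i)]; congr 1; ring
    | pred i ih => intro k; rw [← ih k, ← h1 (k + q * (-i - 1))]; congr 1; ring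
  have e2 : ∀ m k : ℤ, a (k + p * m) = w ^ m * a k * (w ^ m)⁻¹ := by
    intro m
    induction m using Int.induction_on with
    | zero => simp
    | succ i ih =>
      intro k
      have := h2 (k + p * i)
      rw [ih k] at this
      rw [show k + (p : ℤ) * (i + 1) = k + p * i + p by ring, this, add_comm (i : ℤ) 1,
        zpow_add, zpow_one]
      group
    | pred i ih =>
      intro k
      have := h2 (k + p * (-i - 1))
      rw [show k + (p : ℤ) * (-i - 1) + p = k + p * (-i) by ring, ih k] at this
      have h3 : a (k + p * (-i - 1)) = w⁻¹ * (w * a (k + p * (-i - 1)) * w⁻¹) * w := by group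
      rw [h3, ← this, show (-(i : ℤ) - 1) = -1 + -i by ring, zpow_add w (-1), zpow_neg_one]
      group
  have e3 := e1 (v * k) (0 + p * (u * k))
  rw [e2] at e3
  rw [← e3]; congr 1
  linear_combination (-k) * huv

theorem list_prod_formula {H : Type*} [Group H] (w b : H) (u : ℤ) (n : ℕ) :
    ((List.range n).reverse.map
      (fun i : ℕ => w ^ (u * (i : ℤ)) * b * (w ^ (u * (i : ℤ)))⁻¹)).prod
      = w ^ (u * n) * (w ^ (-u) * b) ^ n := by
  induction n with
  | zero => simp
  | succ n ih =>
    rw [List.range_succ, List.reverse_append]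
    simp only [List.reverse_singleton, List.map_append, List.map_cons, List.map_nil,
      List.prod_append, List.prod_singleton]
    rw [ih, pow_succ' _ n]
    have : w ^ (u * ((n + 1 : ℕ) : ℤ)) = w ^ (u * (n : ℤ)) * w ^ u := by
      rw [← zpow_add]; congr 1; push_cast; ring
    rw [this]
    generalize (w ^ (-u) * b) ^ n = z
    group

end Helpers

/-- If `gcd(p,q) = 1`, then `G(p;q;q)` is isomorphic to the free product `ℤ/pℤ * ℤ/qℤ`. -/
theorem stmt_10 (p q : ℕ) (hp : 0 < p) (hq : 0 < q) (hpq : Nat.gcd p q = 1) :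
    Nonempty (Gpqr p q q ≃* Monoid.Coprod (Multiplicative (ZMod p)) (Multiplicative (ZMod q))) := by
  obtain ⟨u, v, huv⟩ : ∃ u v : ℤ, (p : ℤ) * u + q * v = 1 :=
    ⟨_, _, by rw [← Nat.gcd_eq_gcd_ab, hpq]; rfl⟩
  -- relations in the presented group
  let P : FreeGroup (Option ℤ) →* Gpqr p q q := PresentedGroup.mk (gRelsProj p q q)
  let w : Gpqr p q q := P (FreeGroup.of none)
  let a : ℤ → Gpqr p q q := fun k => P (FreeGroup.of (some k))
  have hP : ∀ r ∈ gRelsProj p q q, P r = 1 := fun r hr => PresentedGroup.one_of_mem hr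
  have hwq : w ^ q = 1 := by
    have := hP (FreeGroup.of none ^ q) (Or.inr rfl)
    rwa [map_pow] at this
  have h1 : ∀ k, a (k + q) = a k := by
    intro k
    have := hP _ (Or.inl (Or.inl (Or.inr (Set.mem_iUnion.2 ⟨k, rfl⟩))))
    rwa [map_mul, map_inv, mul_inv_eq_one] at this
  have h2 : ∀ k, a (k + p) = w * a k * w⁻¹ := by
    intro k
    have := hP _ (Or.inl (Or.inr (Set.mem_iUnion.2 ⟨k, rfl⟩)))
    rwa [map_mul, map_inv, mul_inv_eq_one, map_mul, map_mul, map_inv] at this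
  have ha := conj_formula p q w a h1 h2 u v huv
  have hw0 : w = ((List.range p).reverse.map (fun i : ℕ => a i)).prod := by
    have := hP _ (Or.inl (Or.inl (Or.inl rfl)))
    rw [map_mul, map_inv, mul_inv_eq_one, omegaWord_eq, map_list_prod, List.map_map] at this
    exact this
  have hx : (w ^ (-u) * a 0) ^ p = 1 := by
    have h3 : w = w ^ (u * p) * (w ^ (-u) * a 0) ^ p := by
      rw [← list_prod_formula, ← funext (fun i : ℕ => ha i)]
      exact hw0
    rw [zpow_congr_of w q hwq (u * p) 1 (-v) (by linear_combination huv), zpow_one] at h3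
    exact (mul_eq_left.1 h3.symm)
  obtain ⟨f1, hf1⟩ := exists_hom_zmod p _ hx
  obtain ⟨f2, hf2⟩ := exists_hom_zmod q w hwq
  -- the other direction
  let C := Monoid.Coprod (Multiplicative (ZMod p)) (Multiplicative (ZMod q))
  let x : C := Monoid.Coprod.inl (Multiplicative.ofAdd 1)
  let y : C := Monoid.Coprod.inr (Multiplicative.ofAdd 1)
  have hxp : x ^ p = 1 := by
    change (Monoid.Coprod.inl _) ^ p = _
    rw [← map_pow, mzmod_pow, map_one]
  have hyq : y ^ q = 1 := by
    change (Monoid.Coprod.inr _) ^ q = _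
    rw [← map_pow, mzmod_pow, map_one]
  let b : ℤ → C := fun k => y ^ (u * k) * (y ^ u * x) * (y ^ (u * k))⁻¹
  let F : Option ℤ → C := fun o => o.elim y b
  have hF : ∀ r ∈ gRelsProj p q q, FreeGroup.lift F r = 1 := by
    rintro r (((hr | hr) | hr) | hr)
    · rw [Set.mem_singleton_iff.1 hr, map_mul, map_inv, mul_inv_eq_one, omegaWord_eq, map_list_prod,
        List.map_map]
      have h4 := list_prod_formula y (y ^ u * x) u p
      rw [zpow_congr_of y q hyq (u * p) 1 (-v) (by linear_combination huv), zpow_one,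
        show y ^ (-u) * (y ^ u * x) = x by group, hxp, mul_one] at h4
      rw [FreeGroup.lift_apply_of]
      change y = _
      rw [← h4]
      congr 2
      funext i
      simp [F, b, h4]
    · obtain ⟨k, hk⟩ := Set.mem_iUnion.1 hr
      rw [Set.mem_singleton_iff.1 hk, map_mul, map_inv, mul_inv_eq_one, FreeGroup.lift_apply_of,
        FreeGroup.lift_apply_of]
      change y ^ (u * (k + q)) * (y ^ u * x) * (y ^ (u * (k + q)))⁻¹ = y ^ (u * k) * (y ^ u * x) * (y ^ (u * k))⁻¹
      rw [zpow_congr_of y q hyq (u * (k + q)) (u * k) u (by ring)]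
    · obtain ⟨k, hk⟩ := Set.mem_iUnion.1 hr
      rw [Set.mem_singleton_iff.1 hk, map_mul, map_inv, mul_inv_eq_one, map_mul, map_mul, map_inv,
        FreeGroup.lift_apply_of, FreeGroup.lift_apply_of, FreeGroup.lift_apply_of]
      change y ^ (u * (k + p)) * (y ^ u * x) * (y ^ (u * (k + p)))⁻¹ = y * (y ^ (u * k) * (y ^ u * x) * (y ^ (u * k))⁻¹) * y⁻¹
      rw [zpow_congr_of y q hyq (u * (k + p)) (1 + u * k) (-v) (by linear_combination huv),
        zpow_add, zpow_one]
      group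
    · rw [Set.mem_singleton_iff.1 hr, map_pow, FreeGroup.lift_apply_of]
      exact hyq
  let Φ : Gpqr p q q →* C := PresentedGroup.toGroup hF
  let Ψ : C →* Gpqr p q q := Monoid.Coprod.lift f1 f2
  have hΦw : Φ w = y := PresentedGroup.toGroup.of hF
  have hΦa : ∀ k, Φ (a k) = b k := fun k => PresentedGroup.toGroup.of hF
  have hΨx : Ψ x = w ^ (-u) * a 0 := by
    rw [← hf1]; exact Monoid.Coprod.lift_apply_inl _ _ _
  have hΨy : Ψ y = w := by
    rw [← hf2]; exact Monoid.Coprod.lift_apply_inr _ _ _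
  refine ⟨MonoidHom.toMulEquiv Φ Ψ ?_ ?_⟩
  · apply PresentedGroup.ext
    rintro (_ | k)
    · change Ψ (Φ w) = w
      rw [hΦw, hΨy]
    · change Ψ (Φ (a k)) = a k
      rw [hΦa, ha k]
      simp only [b, map_mul, map_inv, map_zpow, hΨx, hΨy]
      group
  · apply Monoid.Coprod.hom_ext
    · apply hom_mzmod_ext
      change Φ (Ψ x) = x
      rw [hΨx, map_mul, map_zpow, hΦw, hΦa]
      simp [b]
    · apply hom_mzmod_ext
      change Φ (Ψ y) = y
      rw [hΨy, hΦw]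
end

section
/- Let p, q, r be positive integers with gcd(p,q) = gcd(q,r) = 1. Then the group G(p;q;r) is isomorphic to the cyclic group ℤ/prℤ. -/
/-- The word `omegaWord p` maps to a `p`-th power when all `a k` map to the same element. -/
theorem omegaWord_map {H : Type*} [Group H] (f : FreeGroup (Option ℤ) →* H) (x : H)
    (hx : ∀ k : ℤ, f (FreeGroup.of (some k)) = x) (p : ℕ) : f (omegaWord p) = x ^ p := by
  unfold omegaWord
  rw [map_list_prod, List.map_map]
  rw [List.prod_eq_pow_card _ x]
  · simp
  · intro y hy
    simp only [List.mem_map, Function.comp] at hy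
    obtain ⟨i, -, rfl⟩ := hy
    exact hx i

/-- If `gcd(p,q) = gcd(q,r) = 1`, then `G(p;q;r)` is isomorphic to the cyclic group `ℤ/prℤ`. -/
theorem stmt_12 (p q r : ℕ) (hp : 0 < p) (hq : 0 < q) (hr : 0 < r)
    (hpq : Nat.gcd p q = 1) (hqr : Nat.gcd q r = 1) :
    Nonempty (Gpqr p q r ≃* Multiplicative (ZMod (p * r))) := by
  classical
  -- the forward map
  let f : Option ℤ → Multiplicative (ZMod (p * r)) := fun o =>
    match o with
    | none => Multiplicative.ofAdd 1 ^ p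
    | some _ => Multiplicative.ofAdd 1
  have hone : (Multiplicative.ofAdd (1 : ZMod (p * r))) ^ (p * r) = 1 := by
    rw [← ofAdd_nsmul, nsmul_one, ZMod.natCast_self, ofAdd_zero]
  have hf : ∀ w ∈ gRelsProj p q r, FreeGroup.lift f w = 1 := by
    intro w hw
    simp only [gRelsProj, gRels, Set.mem_union, Set.mem_iUnion, Set.mem_singleton_iff] at hw
    rcases hw with ((rfl | ⟨k, rfl⟩) | ⟨k, rfl⟩) | rfl
    · rw [map_mul, map_inv, omegaWord_map (FreeGroup.lift f) (Multiplicative.ofAdd 1)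
        (fun k => by simp [f])]
      simp [f]
    · simp [f]
    · simp [f]
    · rw [map_pow, FreeGroup.lift_apply_of]
      simp only [f]
      rw [← pow_mul, hone]
  let φ : Gpqr p q r →* Multiplicative (ZMod (p * r)) := PresentedGroup.toGroup hf
  let m : FreeGroup (Option ℤ) →* Gpqr p q r := PresentedGroup.mk (gRelsProj p q r)
  have hm : ∀ w ∈ gRelsProj p q r, m w = 1 := fun w hw =>
    (PresentedGroup.mk_eq_one_iff).2 (Subgroup.subset_normalClosure hw)
  let a : ℤ → Gpqr p q r := fun k => m (FreeGroup.of (some k))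
  let ω : Gpqr p q r := m (FreeGroup.of none)
  have h1 : ω = m (omegaWord p) := by
    have := hm _ (Or.inl (Or.inl (Or.inl rfl)))
    rwa [map_mul, map_inv, mul_inv_eq_one] at this
  have h2 : ∀ k, a (k + q) = a k := by
    intro k
    have := hm _ (Or.inl (Or.inl (Or.inr (Set.mem_iUnion.2 ⟨k, rfl⟩))))
    rwa [map_mul, map_inv, mul_inv_eq_one] at this
  have h3 : ∀ k, a (k + p) = ω * a k * ω⁻¹ := by
    intro k
    have := hm _ (Or.inl (Or.inr (Set.mem_iUnion.2 ⟨k, rfl⟩)))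
    rwa [map_mul, map_inv, mul_inv_eq_one, map_mul, map_mul, map_inv] at this
  have h4 : ω ^ r = 1 := by
    have := hm _ (Or.inr rfl)
    rwa [map_pow] at this
  have h5 : ∀ (n : ℕ) (k : ℤ), a (k + n * p) = ω ^ n * a k * (ω ^ n)⁻¹ := by
    intro n
    induction n with
    | zero => intro k; simp
    | succ n ih =>
      intro k
      have : k + ((n + 1 : ℕ) : ℤ) * p = (k + n * p) + p := by push_cast; ring
      rw [this, h3, ih, pow_succ']
      group
  have hP1 : Function.Periodic a (q : ℤ) := h2
  have hP2 : Function.Periodic a ((r : ℤ) * p) := by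
    intro k
    rw [h5, h4]; simp
  have hcop : IsCoprime (q : ℤ) ((r : ℤ) * p) := by
    have : Nat.Coprime q (r * p) :=
      Nat.Coprime.mul_right hqr (Nat.Coprime.symm hpq)
    exact_mod_cast Nat.isCoprime_iff_coprime.2 this
  obtain ⟨u, v, huv⟩ := hcop
  have hP3 : Function.Periodic a 1 := by
    have := (hP1.int_mul u).add_period (hP2.int_mul v)
    simpa [huv] using this
  have hconst : ∀ k, a k = a 0 := by
    intro k
    have := (hP3.int_mul k) 0
    simpa using this
  have hω : ω = a 0 ^ p := by
    rw [h1, omegaWord_map m (a 0) hconst]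
  have hpr : a 0 ^ (p * r) = 1 := by rw [pow_mul, ← hω, h4]
  have htop : Subgroup.zpowers (a 0) = ⊤ := by
    rw [eq_top_iff, ← PresentedGroup.closure_range_of, Subgroup.closure_le]
    rintro _ ⟨o, rfl⟩
    cases o with
    | none => exact ⟨p, (zpow_natCast (a 0) p).trans hω.symm⟩
    | some k => exact ⟨1, (zpow_one (a 0)).trans (hconst k).symm⟩
  have hφ : φ (a 0) = Multiplicative.ofAdd 1 := PresentedGroup.toGroup.of hf
  have hφz : ∀ n : ℤ, φ (a 0 ^ n) = Multiplicative.ofAdd (n : ZMod (p * r)) := by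
    intro n
    rw [map_zpow, hφ, ← ofAdd_zsmul, zsmul_one]
  refine ⟨MulEquiv.ofBijective φ ⟨?_, ?_⟩⟩
  · rw [injective_iff_map_eq_one]
    intro g hg
    have : g ∈ Subgroup.zpowers (a 0) := htop ▸ Subgroup.mem_top g
    obtain ⟨n, rfl⟩ := this
    have hn : φ (a 0 ^ n) = 1 := hg
    rw [hφz, ofAdd_eq_one, ZMod.intCast_zmod_eq_zero_iff_dvd] at hn
    obtain ⟨c, rfl⟩ := hn
    change a 0 ^ _ = 1
    rw [zpow_mul, zpow_natCast, hpr, one_zpow]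
  · intro y
    obtain ⟨n, hn⟩ := ZMod.intCast_surjective (Multiplicative.toAdd y)
    exact ⟨a 0 ^ n, by rw [hφz, hn, ofAdd_toAdd]⟩
end

section
/- The group G(3;2) is isomorphic to the Artin braid group B(3) on three strings, i.e., to the group with two generators x, y and the single relation xyx = yxy. -/
/-- The braid relator `x y x (y x y)⁻¹` on two generators. -/
def braidRels : Set (FreeGroup Bool) :=
  {FreeGroup.of true * FreeGroup.of false * FreeGroup.of true *
    (FreeGroup.of false * FreeGroup.of true * FreeGroup.of false)⁻¹}

/-- The Artin braid group `B(3)` on three strings, presented by two generators `x`, `y`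
and the single relation `x y x = y x y`. -/
abbrev BraidThree : Type := PresentedGroup braidRels

/-- Images of the generators of `G(3;2)` in a group with elements `x`, `y`. -/
def gImg {H : Type} [Group H] (x y : H) : Option ℤ → H
  | none => x * y * x
  | some k => if Even k then x else y

theorem braid_rel : (PresentedGroup.of true * PresentedGroup.of false * PresentedGroup.of true :
    BraidThree) =
    PresentedGroup.of false * PresentedGroup.of true * PresentedGroup.of false := by
  have h : (PresentedGroup.mk braidRels) (FreeGroup.of true * FreeGroup.of false *
      FreeGroup.of true *
      (FreeGroup.of false * FreeGroup.of true * FreeGroup.of false)⁻¹) = 1 :=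
    PresentedGroup.one_of_mem (by simp [braidRels])
  rw [map_mul, map_inv, mul_inv_eq_one] at h
  simp only [map_mul] at h
  exact h

theorem g_shift2 (k : ℤ) : (PresentedGroup.of (some (k + 2)) : Gpq 3 2) =
    PresentedGroup.of (some k) := by
  have h : (PresentedGroup.mk (gRels 3 2)) (FreeGroup.of (some (k + ((2 : ℕ) : ℤ))) *
      (FreeGroup.of (some k))⁻¹) = 1 :=
    PresentedGroup.one_of_mem (Or.inl (Or.inr (Set.mem_iUnion.2 ⟨k, rfl⟩)))
  rw [map_mul, map_inv, mul_inv_eq_one] at h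
  exact h

theorem g_shift3 (k : ℤ) : (PresentedGroup.of (some (k + 3)) : Gpq 3 2) =
    PresentedGroup.of none * PresentedGroup.of (some k) * (PresentedGroup.of none)⁻¹ := by
  have h : (PresentedGroup.mk (gRels 3 2)) (FreeGroup.of (some (k + ((3 : ℕ) : ℤ))) *
      (FreeGroup.of none * FreeGroup.of (some k) * (FreeGroup.of none)⁻¹)⁻¹) = 1 :=
    PresentedGroup.one_of_mem (Or.inr (Set.mem_iUnion.2 ⟨k, rfl⟩))
  rw [map_mul, map_inv, mul_inv_eq_one] at h
  exact h

theorem g_omega : (PresentedGroup.of none : Gpq 3 2) =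
    PresentedGroup.of (some 0) * PresentedGroup.of (some 1) * PresentedGroup.of (some 0) := by
  have h : (PresentedGroup.mk (gRels 3 2)) (FreeGroup.of none * (omegaWord 3)⁻¹) = 1 :=
    PresentedGroup.one_of_mem (Or.inl (Or.inl rfl))
  rw [map_mul, map_inv, mul_inv_eq_one] at h
  have e : omegaWord 3 = FreeGroup.of (some 2) * FreeGroup.of (some 1) * FreeGroup.of (some 0) := by
    simp [omegaWord, List.range_succ, mul_assoc]
  rw [e, map_mul, map_mul] at h
  have h2 := g_shift2 0
  rw [zero_add] at h2
  rw [← h2] 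
  nth_rewrite 2 [h2]
  exact h

theorem g_braid : (PresentedGroup.of (some 0) * PresentedGroup.of (some 1) *
    PresentedGroup.of (some 0) : Gpq 3 2) =
    PresentedGroup.of (some 1) * PresentedGroup.of (some 0) * PresentedGroup.of (some 1) := by
  have h := g_shift3 0
  have h2 := g_shift2 1
  rw [zero_add, show (3 : ℤ) = 1 + 2 by norm_num, h2, g_omega, eq_mul_inv_iff_mul_eq] at h
  simp only [← mul_assoc] at h
  exact (mul_right_cancel h).symm

theorem g_parity (k : ℤ) : (PresentedGroup.of (some k) : Gpq 3 2) =
    if Even k then PresentedGroup.of (some 0) else PresentedGroup.of (some 1) := by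
  have key : ∀ (c m : ℤ), (PresentedGroup.of (some (c + 2 * m)) : Gpq 3 2) =
      PresentedGroup.of (some c) := by
    intro c m
    induction m using Int.induction_on with
    | zero => simp
    | succ i ih => rw [← ih, ← g_shift2 (c + 2 * i)]; congr 2; ring
    | pred i ih => rw [← ih, ← g_shift2]; congr 2; ring
  split_ifs with h
  · obtain ⟨m, rfl⟩ := h
    rw [← key 0 m]; congr 2; ring
  · obtain ⟨m, rfl⟩ := Int.not_even_iff_odd.1 h
    rw [← key 1 m]; congr 2; ring

theorem g_rels_hold {H : Type} [Group H] (x y : H) (hxy : x * y * x = y * x * y) :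
    ∀ r ∈ gRels 3 2, FreeGroup.lift (gImg x y) r = 1 := by
  rintro r ((h | h) | h)
  · rw [Set.mem_singleton_iff.1 h]
    have e : omegaWord 3 =
        FreeGroup.of (some 2) * FreeGroup.of (some 1) * FreeGroup.of (some 0) := by
      simp [omegaWord, List.range_succ, mul_assoc]
    rw [e, map_mul, map_inv, mul_inv_eq_one]
    simp [gImg]
  · obtain ⟨k, h⟩ := Set.mem_iUnion.1 h
    rw [Set.mem_singleton_iff.1 h, map_mul, map_inv, mul_inv_eq_one]
    simp [gImg, Int.even_add]
  · obtain ⟨k, h⟩ := Set.mem_iUnion.1 h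
    rw [Set.mem_singleton_iff.1 h, map_mul, map_inv, mul_inv_eq_one]
    simp only [map_mul, map_inv, FreeGroup.lift_apply_of]
    rw [eq_mul_inv_iff_mul_eq]
    have h3 : ¬ Even (3 : ℤ) := by decide
    by_cases hk : Even k
    · simp only [gImg, Nat.cast_ofNat, Int.even_add, hk, h3, iff_false, not_true, if_true, if_false]
      rw [← mul_assoc, ← mul_assoc, ← hxy]
    · simp only [gImg, Nat.cast_ofNat, Int.even_add, hk, h3, iff_false, not_false_iff, if_true,
        if_false]
      rw [mul_assoc x y x, mul_assoc x (y * x) y, ← hxy, mul_assoc]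

theorem b_rels_hold : ∀ r ∈ braidRels, FreeGroup.lift
    (fun b : Bool => if b then (PresentedGroup.of (some 0) : Gpq 3 2)
      else PresentedGroup.of (some 1)) r = 1 := by
  intro r h
  rw [Set.mem_singleton_iff.1 h, map_mul, map_inv, mul_inv_eq_one]
  simpa using g_braid

/-- `G(3;2)` is isomorphic to the braid group `B(3)`. -/
theorem stmt_17 : Nonempty (Gpq 3 2 ≃* BraidThree) := by
  refine ⟨MonoidHom.toMulEquiv (PresentedGroup.toGroup (g_rels_hold _ _ braid_rel))
    (PresentedGroup.toGroup b_rels_hold) ?_ ?_⟩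
  · apply PresentedGroup.ext
    rintro (_ | k)
    · simp [gImg, g_omega]
    · rw [MonoidHom.comp_apply, PresentedGroup.toGroup.of, MonoidHom.id_apply, g_parity k]
      by_cases hk : Even k <;> simp [gImg, hk]
  · apply PresentedGroup.ext
    rintro (_ | _) <;> simp [gImg]
end

section
/- Let n be a positive integer. In the group G(3;2;2n), the element ω² is central, the cyclic subgroup ⟨ω²⟩ generated by ω² is isomorphic to ℤ/nℤ, and the quotient G(3;2;2n)/⟨ω²⟩ is isomorphic to the free product ℤ/3ℤ * ℤ/2ℤ; in other words, there is a central extension 0 → ℤ/nℤ → G(3;2;2n) → ℤ/3ℤ * ℤ/2ℤ → 0 in which ℤ/nℤ is generated by ω². -/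
namespace Stmt18

lemma exists_zmod_hom {H : Type*} [Group H] (m : ℕ) (h : H) (hh : h ^ m = 1) :
    ∃ f : Multiplicative (ZMod m) →* H, f (Multiplicative.ofAdd 1) = h := by
  refine ⟨AddMonoidHom.toMultiplicativeLeft (ZMod.lift m
    (⟨zmultiplesHom (Additive H) (Additive.ofMul h), ?_⟩ :
      {f : ℤ →+ Additive H // f m = 0})), ?_⟩
  · simp only [zmultiplesHom_apply, natCast_zsmul]
    exact congrArg Additive.ofMul hh
  · have := ZMod.lift_coe m (⟨zmultiplesHom (Additive H) (Additive.ofMul h), by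
      simp only [zmultiplesHom_apply, natCast_zsmul]
      exact congrArg Additive.ofMul hh⟩ : {f : ℤ →+ Additive H // f m = 0}) 1
    simp only [Int.cast_one, zmultiplesHom_apply, one_smul] at this
    exact congrArg Additive.toMul this

section
variable (r : ℕ)

abbrev w : Gpqr 3 2 r := PresentedGroup.of (rels := gRelsProj 3 2 r) none
abbrev a (k : ℤ) : Gpqr 3 2 r := PresentedGroup.of (rels := gRelsProj 3 2 r) (some k)

lemma w_eq : w r = a r 2 * a r 1 * a r 0 := by
  have h : FreeGroup.of none * (omegaWord 3)⁻¹ ∈ gRelsProj 3 2 r :=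
    Or.inl (Or.inl (Or.inl rfl))
  have := PresentedGroup.one_of_mem h
  rw [map_mul, map_inv, mul_inv_eq_one] at this
  refine Eq.trans this ?_
  simp [omegaWord, List.range_succ, PresentedGroup.of, mul_assoc]

lemma a_two (k : ℤ) : a r (k + 2) = a r k := by
  have h : FreeGroup.of (some (k + ((2 : ℕ) : ℤ))) * (FreeGroup.of (some k))⁻¹
      ∈ gRelsProj 3 2 r :=
    Or.inl (Or.inl (Or.inr (Set.mem_iUnion.2 ⟨k, rfl⟩)))
  have := PresentedGroup.one_of_mem h
  rw [map_mul, map_inv, mul_inv_eq_one] at this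
  exact this

lemma a_three (k : ℤ) : a r (k + 3) = w r * a r k * (w r)⁻¹ := by
  have h : FreeGroup.of (some (k + ((3 : ℕ) : ℤ))) *
      (FreeGroup.of none * FreeGroup.of (some k) * (FreeGroup.of none)⁻¹)⁻¹
      ∈ gRelsProj 3 2 r :=
    Or.inl (Or.inr (Set.mem_iUnion.2 ⟨k, rfl⟩))
  have := PresentedGroup.one_of_mem h
  rw [map_mul, map_inv, mul_inv_eq_one] at this
  simp only [map_mul, map_inv] at this
  exact this

lemma w_pow : w r ^ r = 1 := by
  have h : (FreeGroup.of none) ^ r ∈ gRelsProj 3 2 r := Or.inr rfl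
  have := PresentedGroup.one_of_mem h
  simp only [map_pow] at this
  exact this

lemma a_even (k : ℤ) (hk : Even k) : a r k = a r 0 := by
  have hp : Function.Periodic (a r) 2 := a_two r
  obtain ⟨m, rfl⟩ := hk
  have := hp.int_mul m 0
  rw [← this]; congr 1; push_cast; ring

lemma a_odd (k : ℤ) (hk : Odd k) : a r k = a r 1 := by
  have hp : Function.Periodic (a r) 2 := a_two r
  obtain ⟨m, rfl⟩ := hk
  have := hp.int_mul m 1
  rw [← this]; congr 1; push_cast; ring

lemma w_eq' : w r = a r 0 * a r 1 * a r 0 := by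
  rw [w_eq, a_even r 2 (by decide)]

lemma a_one : a r 1 = w r * a r 0 * (w r)⁻¹ := by
  rw [← a_three, a_odd r (0+3) (by decide)]

lemma comm (k : ℤ) : Commute (w r ^ 2) (a r k) := by
  have h1 := a_three r k
  have h2 := a_three r (k + 3)
  have h3 : a r (k + 3 + 3) = a r k := by
    rw [← a_two r k, ← a_two r (k+2), ← a_two r (k+2+2)]; congr 1; ring
  rw [h3, h1] at h2
  have : a r k * (w r)^2 = (w r)^2 * a r k := by
    conv_lhs => rw [h2]
    simp only [pow_two]
    group
  exact this.symm

lemma hom_ext {H : Type*} [Group H] (f g : Gpqr 3 2 r →* H) (hw : f (w r) = g (w r))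
    (h0 : f (a r 0) = g (a r 0)) : f = g := by
  apply PresentedGroup.ext
  rintro (_ | k)
  · exact hw
  · rcases Int.even_or_odd k with hk | hk
    · change f (a r k) = g (a r k)
      rw [a_even r k hk, h0]
    · change f (a r k) = g (a r k)
      rw [a_odd r k hk, a_one]
      simp only [map_mul, map_inv, hw, h0]

lemma central : w r ^ 2 ∈ Subgroup.center (Gpqr 3 2 r) := by
  rw [Subgroup.mem_center_iff]
  intro g
  have : (MulAut.conj (w r ^ 2)).toMonoidHom = MonoidHom.id (Gpqr 3 2 r) := by
    apply hom_ext
    · simp only [MulEquiv.toMonoidHom_eq_coe, MonoidHom.coe_coe, MulAut.conj_apply,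
        MonoidHom.id_apply]
      group
    · have := comm r 0
      simp only [MulEquiv.toMonoidHom_eq_coe, MonoidHom.coe_coe, MulAut.conj_apply,
        MonoidHom.id_apply]
      rw [this.eq]; group
  have h := DFunLike.congr_fun this g
  simp only [MulEquiv.toMonoidHom_eq_coe, MonoidHom.coe_coe, MulAut.conj_apply,
        MonoidHom.id_apply] at h
  exact (mul_inv_eq_iff_eq_mul.1 h).symm

/-- Maps out of the group from a braid-like pair. -/
lemma exists_hom {H : Type*} [Group H] (x y z : H) (hz : z = x * y * x)
    (hy : y * z = z * x) (hx : x * z = z * y) (hr : z ^ r = 1) :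
    ∃ f : Gpqr 3 2 r →* H, f (w r) = z ∧ f (a r 0) = x ∧ f (a r 1) = y := by
  classical
  let g : Option ℤ → H := fun o => o.elim z (fun k => if Even k then x else y)
  have hg : ∀ s ∈ gRelsProj 3 2 r, FreeGroup.lift g s = 1 := by
    rintro s (((hs | hs) | hs) | hs)
    · rw [Set.mem_singleton_iff.1 hs]
      simp [omegaWord, List.range_succ, g, hz, mul_assoc]
    · obtain ⟨k, hk⟩ := Set.mem_iUnion.1 hs
      rw [Set.mem_singleton_iff.1 hk]
      simp [g]
    · obtain ⟨k, hk⟩ := Set.mem_iUnion.1 hs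
      rw [Set.mem_singleton_iff.1 hk, map_mul, map_inv, mul_inv_eq_one]
      have h3 : ¬ Even (3 : ℤ) := by decide
      simp only [map_mul, map_inv, FreeGroup.lift_apply_of, g, Option.elim, Int.even_add,
        Nat.cast_ofNat, h3, iff_false]
      by_cases hk : Even k
      · simp only [hk, not_true, if_false, if_true]
        exact eq_mul_inv_of_mul_eq hy
      · simp only [hk, not_false_iff, if_false, if_true]
        exact eq_mul_inv_of_mul_eq hx
    · rw [Set.mem_singleton_iff.1 hs]
      simp [g, hr]
  refine ⟨PresentedGroup.toGroup hg, ?_, ?_, ?_⟩ 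
  · exact PresentedGroup.toGroup.of hg
  · exact (PresentedGroup.toGroup.of hg).trans (by simp [g])
  · exact (PresentedGroup.toGroup.of hg).trans (by simp [g])

end

lemma order_w (n : ℕ) (hn : 0 < n) : orderOf (w (2 * n) ^ 2) = n := by
  apply Nat.dvd_antisymm
  · apply orderOf_dvd_of_pow_eq_one
    rw [← pow_mul, w_pow]
  · have : NeZero (6 * n) := ⟨by omega⟩
    let u : Multiplicative (ZMod (6 * n)) := Multiplicative.ofAdd 1
    have hu : orderOf u = 6 * n := by
      rw [orderOf_ofAdd_eq_addOrderOf, ZMod.addOrderOf_one]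
    obtain ⟨f, hf, -, -⟩ := exists_hom (2 * n) u u (u ^ 3) (by rw [pow_succ, pow_two]) (by group) (by group)
      (by rw [← pow_mul, show 3 * (2 * n) = orderOf u by rw [hu]; ring, pow_orderOf_eq_one])
    have h := orderOf_map_dvd f (w (2 * n) ^ 2)
    rw [map_pow, hf, ← pow_mul, orderOf_pow, hu] at h
    simpa using h

end Stmt18

open Stmt18 in
/-- In `G(3;2;2n)`, the element `ω²` is central, the cyclic subgroup generated by `ω²` is
isomorphic to `ℤ/nℤ`, and the quotient of `G(3;2;2n)` by this subgroup is isomorphic to the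
free product `ℤ/3ℤ * ℤ/2ℤ`: there is a central extension
`0 → ℤ/nℤ → G(3;2;2n) → ℤ/3ℤ * ℤ/2ℤ → 0` in which `ℤ/nℤ` is generated by `ω²`. -/
theorem stmt_18 (n : ℕ) (hn : 0 < n) :
    ((PresentedGroup.of (rels := gRelsProj 3 2 (2 * n)) none) ^ 2 ∈
        Subgroup.center (Gpqr 3 2 (2 * n))) ∧
    Nonempty ((Subgroup.zpowers ((PresentedGroup.of (rels := gRelsProj 3 2 (2 * n)) none) ^ 2))
        ≃* Multiplicative (ZMod n)) ∧
    ∃ φ : Gpqr 3 2 (2 * n) →*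
        Monoid.Coprod (Multiplicative (ZMod 3)) (Multiplicative (ZMod 2)),
      Function.Surjective φ ∧
        φ.ker = Subgroup.zpowers ((PresentedGroup.of (rels := gRelsProj 3 2 (2 * n)) none) ^ 2) := by
  
  refine ⟨central _, ?_, ?_⟩
  · refine ⟨(zmodCyclicMulEquiv (G := Subgroup.zpowers (w (2 * n) ^ 2))
      inferInstance).symm.trans ?_⟩
    rw [Nat.card_zpowers, order_w n hn]
  · let s : Monoid.Coprod (Multiplicative (ZMod 3)) (Multiplicative (ZMod 2)) :=
      Monoid.Coprod.inl (Multiplicative.ofAdd 1)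
    let t : Monoid.Coprod (Multiplicative (ZMod 3)) (Multiplicative (ZMod 2)) :=
      Monoid.Coprod.inr (Multiplicative.ofAdd 1)
    have hs : s ^ 3 = 1 := by
      rw [← map_pow]
      exact (congrArg _ (by decide)).trans (map_one Monoid.Coprod.inl)
    have ht : t ^ 2 = 1 := by
      rw [← map_pow]
      exact (congrArg _ (by decide)).trans (map_one Monoid.Coprod.inr)
    have ht' : t * t = 1 := by rw [← pow_two, ht]
    have hs' : s⁻¹ * (s⁻¹ * s⁻¹) = 1 := by
      rw [← mul_inv_rev, ← mul_inv_rev, inv_eq_one, ← hs, pow_succ, pow_two]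
    obtain ⟨φ, hw, h0, h1⟩ := exists_hom (2 * n) (s⁻¹ * t) (t * s⁻¹) t
      (by
        calc t = (s⁻¹ * (s⁻¹ * s⁻¹)) * t := by rw [hs', one_mul]
          _ = s⁻¹ * 1 * s⁻¹ * s⁻¹ * t := by group
          _ = _ := by rw [← ht']; group)
      (by group)
      (by rw [mul_assoc, ht', ← mul_assoc, ht', one_mul, mul_one])
      (by rw [pow_mul, ht, one_pow])
    have hcN : Subgroup.zpowers (w (2 * n) ^ 2) ≤ Subgroup.center _ := by
      rw [Subgroup.zpowers_le]; exact central _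
    have : (Subgroup.zpowers (w (2 * n) ^ 2)).Normal := by
      refine ⟨fun x hx g => ?_⟩
      rw [Subgroup.mem_center_iff.1 (hcN hx) g, mul_inv_cancel_right]
      exact hx
    have key1 : w (2 * n) = a (2 * n) 0 * a (2 * n) 1 * a (2 * n) 0 := w_eq' _
    have key2 : a (2 * n) 1 = w (2 * n) * a (2 * n) 0 * (w (2 * n))⁻¹ := a_one _
    have hq2 : (QuotientGroup.mk' (Subgroup.zpowers (w (2 * n) ^ 2)) (w (2 * n))) ^ 2 = 1 := by
      rw [← map_pow, QuotientGroup.mk'_apply, QuotientGroup.eq_one_iff]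
      exact Subgroup.mem_zpowers _
    have hq3 : (QuotientGroup.mk' (Subgroup.zpowers (w (2 * n) ^ 2))
        (a (2 * n) 0 * a (2 * n) 1)) ^ 3 = 1 := by
      rw [← hq2, ← map_pow, ← map_pow]
      congr 1
      have e : a (2 * n) 1 * w (2 * n) = w (2 * n) * a (2 * n) 0 := by
        rw [key2]; group
      have e3 : a (2 * n) 1 * a (2 * n) 0 * a (2 * n) 1 = w (2 * n) := by
        apply mul_right_cancel (b := a (2 * n) 0)
        rw [← e]
        conv_rhs => rw [key1]
        group
      calc (a (2 * n) 0 * a (2 * n) 1) ^ 3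
          = (a (2 * n) 0 * a (2 * n) 1 * a (2 * n) 0) *
            (a (2 * n) 1 * a (2 * n) 0 * a (2 * n) 1) := by
              simp only [pow_succ, pow_zero, one_mul, mul_assoc]
        _ = w (2 * n) ^ 2 := by rw [e3, ← key1, pow_two]
    obtain ⟨f, hf⟩ := exists_zmod_hom 3 _ hq3
    obtain ⟨g, hg⟩ := exists_zmod_hom 2 _ hq2
    have hcomp : (Monoid.Coprod.lift f g).comp φ =
        QuotientGroup.mk' (Subgroup.zpowers (w (2 * n) ^ 2)) := by
      apply hom_ext
      · rw [MonoidHom.comp_apply, hw, Monoid.Coprod.lift_apply_inr, hg]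
      · rw [MonoidHom.comp_apply, h0, map_mul, map_inv, Monoid.Coprod.lift_apply_inr, hg,
          Monoid.Coprod.lift_apply_inl, hf, ← map_inv, ← map_mul]
        congr 1
        conv_lhs => rw [key1]
        group
    refine ⟨φ, ?_, ?_⟩
    · rw [← MonoidHom.range_eq_top, eq_top_iff, ← Monoid.Coprod.range_inl_sup_range_inr, sup_le_iff]
      have hsr : s ∈ φ.range := by
        have : s = φ (w (2 * n) * (a (2 * n) 0)⁻¹) := by
          rw [map_mul, map_inv, hw, h0]; group
        exact ⟨_, this.symm⟩
      have htr : t ∈ φ.range := ⟨_, hw⟩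
      constructor
      · rintro _ ⟨x, rfl⟩
        have : x = (Multiplicative.ofAdd 1) ^ (ZMod.val x.toAdd) := by
          revert x; decide
        rw [this, map_pow]; exact pow_mem hsr _
      · rintro _ ⟨x, rfl⟩
        have : x = (Multiplicative.ofAdd 1) ^ (ZMod.val x.toAdd) := by
          revert x; decide
        rw [this, map_pow]; exact pow_mem htr _
    · apply le_antisymm
      · intro x hx
        have h := DFunLike.congr_fun hcomp x
        rw [MonoidHom.comp_apply, MonoidHom.mem_ker.1 hx, map_one] at h
        exact (QuotientGroup.eq_one_iff x).1 h.symm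
      · rw [Subgroup.zpowers_le, MonoidHom.mem_ker, map_pow, hw, ht]
end
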